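/- Let N ≥ 1, let ι be a nonempty index set, and let j : ι × ℝ^N → ℝ be such that for every i ∈ ι the function j(i, ·) is convex, j(i, 0) = 0 and j(i, r) ≥ 0 for all r. Suppose that for each i the Fenchel conjugate j*(i, ω) = sup_{s ∈ ℝ^N} (⟨ω, s⟩ − j(i, s)) is finite for every ω ∈ ℝ^N, and assume the uniform superlinearity of the conjugates: for every A > 0 there exists R > 0 such that j*(i, ω) ≥ A|ω| whenever i ∈ ι and |ω| ≥ R. Then for every M > 0 there exists a constant Y_M > 0 such that: whenever i ∈ ι, r, ω ∈ ℝ^N, ω ∈ ∂j(i, ·)(r) and |r| ≤ M, one has |ω| ≤ Y_M. -/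

import Mathlib

open scoped RealInnerProductSpace

/-!
If `ω ∈ ∂f(r)`, then the supremum defining `f*(ω)` is attained at `r`, so that
`f*(ω) = ⟨ω, r⟩ - f(r) ≤ M|ω| - c` when `|r| ≤ M` and `c ≤ f(r)`. Once `|ω|` is so large that
`(M + 1)|ω| ≤ f*(ω)`, this forces `|ω| ≤ -c`.
-/

section Subgradient

variable {E : Type*} [SeminormedAddCommGroup E] [InnerProductSpace ℝ E]

/-- The subdifferential `∂f(r)`, with linear functionals represented by vectors through the inner
product. -/
def subdifferential (f : E → ℝ) (r : E) : Set E :=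
  {ω | ∀ s, f r + ⟪ω, s - r⟫ ≤ f s}

/-- The Fenchel conjugate `f*`. It is extended-real-valued so that an unbounded supremum is `⊤`. -/
noncomputable def fenchelConjugate (f : E → ℝ) (ω : E) : EReal :=
  ⨆ s, ((⟪ω, s⟫ - f s : ℝ) : EReal)

/-- Superlinear growth `g i ω / ‖ω‖ → ∞` as `‖ω‖ → ∞`, uniformly in `i`; the quotient is cleared
to avoid division in `EReal`. -/
def UniformlySuperlinear {ι : Type*} (g : ι → E → EReal) : Prop :=
  ∀ A > (0 : ℝ), ∃ R > (0 : ℝ), ∀ i ω, R ≤ ‖ω‖ → ((A * ‖ω‖ : ℝ) : EReal) ≤ g i ω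

variable {f : E → ℝ} {r ω : E}

theorem coe_ciSup_eq_fenchelConjugate (h : BddAbove (Set.range fun s => ⟪ω, s⟫ - f s)) :
    ((⨆ s, (⟪ω, s⟫ - f s) : ℝ) : EReal) = fenchelConjugate f ω :=
  EReal.coe_strictMono.monotone.map_ciSup_of_continuousAt
    continuous_coe_real_ereal.continuousAt h

theorem fenchelConjugate_eq_of_mem_subdifferential (hω : ω ∈ subdifferential f r) :
    fenchelConjugate f ω = ((⟪ω, r⟫ - f r : ℝ) : EReal) := by
  refine le_antisymm (iSup_le fun s => EReal.coe_le_coe ?_)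
    (le_iSup (fun s => ((⟪ω, s⟫ - f s : ℝ) : EReal)) r)
  have subgradient_le : f r + ⟪ω, s - r⟫ ≤ f s := hω s
  rw [inner_sub_right] at subgradient_le
  linarith

theorem norm_le_of_mem_subdifferential_of_le_fenchelConjugate {M c : ℝ}
    (hω : ω ∈ subdifferential f r) (hr : ‖r‖ ≤ M) (hc : c ≤ f r)
    (hgrowth : (((M + 1) * ‖ω‖ : ℝ) : EReal) ≤ fenchelConjugate f ω) : ‖ω‖ ≤ -c := by
  rw [fenchelConjugate_eq_of_mem_subdifferential hω, EReal.coe_le_coe_iff] at hgrowth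
  have hlinear : (M + 1) * ‖ω‖ ≤ ‖ω‖ * M - c :=
    calc
      (M + 1) * ‖ω‖ ≤ ⟪ω, r⟫ - f r := hgrowth
      _ ≤ ‖ω‖ * ‖r‖ - c := sub_le_sub (real_inner_le_norm ω r) hc
      _ ≤ ‖ω‖ * M - c := by gcongr
  linarith

theorem superlinear_conjugate_bounded_general {ι : Type*} {j : ι → E → ℝ}
    (hbelow : ∀ M > (0 : ℝ), ∃ c, ∀ i r, ‖r‖ ≤ M → c ≤ j i r)
    (hsup : UniformlySuperlinear fun i => fenchelConjugate (j i)) :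
    ∀ M > (0 : ℝ), ∃ Y > (0 : ℝ),
      ∀ i r, ∀ ω ∈ subdifferential (j i) r, ‖r‖ ≤ M → ‖ω‖ ≤ Y := by
  intro M hM
  obtain ⟨c, hc⟩ := hbelow M hM
  obtain ⟨R, hR, hgrowth⟩ := hsup (M + 1) (by positivity)
  refine ⟨max R (-c), lt_max_of_lt_left hR, fun i r ω hω hr => ?_⟩
  rcases le_total ‖ω‖ R with hsmall | hlarge
  · exact le_max_of_le_left hsmall
  · exact le_max_of_le_right <| norm_le_of_mem_subdifferential_of_le_fenchelConjugate
      hω hr (hc i r hr) (hgrowth i ω hlarge)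

end Subgradient

/-- Uniform superlinearity of the Fenchel conjugates `j*(i,·)` implies a uniform bound:
if `ω ∈ ∂j(i,·)(r)` and `|r| ≤ M`, then `|ω| ≤ Y_M`. -/
theorem superlinear_conjugate_bounded (N : ℕ) (hN : 1 ≤ N) {ι : Type*} [Nonempty ι]
    (j : ι → EuclideanSpace ℝ (Fin N) → ℝ)
    (hconv : ∀ i, ConvexOn ℝ Set.univ (j i)) (h0 : ∀ i, j i 0 = 0)
    (hnn : ∀ i r, 0 ≤ j i r)
    (hbdd : ∀ i (ω : EuclideanSpace ℝ (Fin N)),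
      BddAbove (Set.range fun s : EuclideanSpace ℝ (Fin N) => ⟪ω, s⟫ - j i s))
    (hsup : ∀ A > (0:ℝ), ∃ R > (0:ℝ), ∀ i (ω : EuclideanSpace ℝ (Fin N)), R ≤ ‖ω‖ →
      A * ‖ω‖ ≤ ⨆ s : EuclideanSpace ℝ (Fin N), (⟪ω, s⟫ - j i s)) :
    ∀ M > (0:ℝ), ∃ Y > (0:ℝ),
      ∀ i (r ω : EuclideanSpace ℝ (Fin N)),
        (∀ s, j i r + ⟪ω, s - r⟫ ≤ j i s) → ‖r‖ ≤ M → ‖ω‖ ≤ Y := by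
  refine superlinear_conjugate_bounded_general (fun _ _ => ⟨0, fun i r _ => hnn i r⟩) fun A hA => ?_
  simpa only [← coe_ciSup_eq_fenchelConjugate (hbdd _ _), EReal.coe_le_coe_iff] using hsup A hA
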